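/- Let A be a complete filtered algebra over a field K of characteristic zero, R : A → A a K-linear map preserving the filtration, R̃ := id_A − R, and let χ : A₁ → A₁ be the unique map with (χ − id)(Aₙ) ⊆ A₂ₙ for all n ≥ 1 and exp(R(χ(x)))·exp(R̃(χ(x))) = exp(x) for all x ∈ A₁. Then χ is a bijection of A₁ onto itself, and its inverse is given by χ⁻¹(x) = log(exp(R(x))·exp(R̃(x))) for all x ∈ A₁. -/

import Mathlib

open scoped Classical

/-- A complete filtered algebra over a field `K` of characteristic zero: an associative unital
`K`-algebra `A` with a decreasing filtration `A = F 0 ⊇ F 1 ⊇ ⋯` by (two-sided, here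
`K`-submodules closed under multiplication in the filtered sense) ideals, which is separated
and complete: every series `Σ aₙ` with `aₙ ∈ F n` converges (has a limit in the filtration
topology). -/
structure CompleteFilteredAlgebra (K A : Type*) [Field K] [CharZero K] [Ring A] [Algebra K A] where
  F : ℕ → Submodule K A
  F_zero : F 0 = ⊤
  F_succ_le : ∀ n : ℕ, F (n + 1) ≤ F n
  F_mul : ∀ m n : ℕ, ∀ x ∈ F m, ∀ y ∈ F n, x * y ∈ F (m + n)
  F_sep : ∀ x : A, (∀ n : ℕ, x ∈ F n) → x = 0
  F_complete : ∀ a : ℕ → A, (∀ n : ℕ, a n ∈ F n) →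
    ∃ s : A, ∀ N : ℕ, s - ∑ n ∈ Finset.range N, a n ∈ F N

namespace CompleteFilteredAlgebra

variable {K A : Type*} [Field K] [CharZero K] [Ring A] [Algebra K A]

/-- The exponential `exp x = Σ_{n≥0} xⁿ/n!`, defined (as the limit of its partial sums) for
every `x ∈ F 1`; junk value `0` elsewhere. -/
noncomputable def exp (FA : CompleteFilteredAlgebra K A) (x : A) : A :=
  if h : ∀ n : ℕ, ((n.factorial : K)⁻¹ • x ^ n) ∈ FA.F n then
    Classical.choose (FA.F_complete _ h)
  else 0

/-- The logarithm `log (1 + y) = Σ_{n≥1} (-1)^(n-1) yⁿ/n`, defined (as the limit of its partial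
sums) whenever the argument lies in `1 + F 1`; junk value `0` elsewhere. (The `n = 0` term of
the defining sequence is `0` since `1/0 = 0` in `K`.) -/
noncomputable def log (FA : CompleteFilteredAlgebra K A) (y : A) : A :=
  if h : ∀ n : ℕ, ((((-1 : K) ^ (n - 1)) / (n : K)) • (y - 1) ^ n) ∈ FA.F n then
    Classical.choose (FA.F_complete _ h)
  else 0

end CompleteFilteredAlgebra

namespace CompleteFilteredAlgebra

open Polynomial

section Poly

variable (K : Type*) [Field K] [CharZero K]

/-- Truncated exponential polynomial. -/
noncomputable def pE (N : ℕ) : K[X] :=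
  ∑ n ∈ Finset.range N, ((n.factorial : K)⁻¹) • (X : K[X]) ^ n

/-- Truncated logarithm polynomial (in the variable `y` of `log (1 + y)`). -/
noncomputable def pL (N : ℕ) : K[X] :=
  ∑ n ∈ Finset.range N, (((-1 : K) ^ (n - 1)) / (n : K)) • (X : K[X]) ^ n

lemma pE_succ (N : ℕ) : pE K (N + 1) = pE K N + ((N.factorial : K)⁻¹) • (X : K[X]) ^ N := by
  simp [pE, Finset.sum_range_succ]

lemma pL_succ (N : ℕ) :
    pL K (N + 1) = pL K N + (((-1 : K) ^ (N - 1)) / (N : K)) • (X : K[X]) ^ N := by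
  simp [pL, Finset.sum_range_succ]

lemma derivative_pE (N : ℕ) : derivative (pE K (N + 1)) = pE K N := by
  induction N with
  | zero => simp [pE]
  | succ N ih =>
    rw [pE_succ, derivative_add, ih, pE_succ K N]
    congr 1
    rw [derivative_smul, derivative_X_pow, Nat.add_sub_cancel, ← smul_eq_C_mul, smul_smul]
    congr 1
    rw [Nat.factorial_succ]
    have h1 : ((N : K) + 1) ≠ 0 := by exact_mod_cast Nat.succ_ne_zero N
    have h2 : (N.factorial : K) ≠ 0 := by exact_mod_cast Nat.factorial_ne_zero N
    push_cast
    field_simp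

lemma derivative_pL (N : ℕ) :
    (1 + X) * derivative (pL K (N + 1)) = 1 - (-X) ^ N := by
  induction N with
  | zero => simp [pL]
  | succ N ih =>
    rw [pL_succ, derivative_add, mul_add, ih, derivative_smul, derivative_X_pow,
      Nat.add_sub_cancel, ← smul_eq_C_mul, smul_smul]
    have h1 : ((N : K) + 1) ≠ 0 := by exact_mod_cast Nat.succ_ne_zero N
    have h2 : (-1 : K) ^ N / ((N + 1 : ℕ) : K) * ((N + 1 : ℕ) : K) = (-1) ^ N := by
      push_cast
      field_simp
    rw [h2, smul_eq_C_mul, neg_pow (X : K[X]) N, neg_pow (X : K[X]) (N + 1)]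
    simp only [map_pow, map_neg, map_one]
    ring

lemma X_dvd_pL (N : ℕ) : (X : K[X]) ∣ pL K N := by
  refine Finset.dvd_sum fun n _ => ?_
  cases n with
  | zero => simp
  | succ n => exact dvd_smul_of_dvd _ (dvd_pow_self _ (Nat.succ_ne_zero n))

lemma formal (N : ℕ) : (X : K[X]) ^ (N + 1) ∣ (pE K (N + 1)).comp (pL K (N + 1)) - (1 + X) := by
  set E := (pE K (N + 1)).comp (pL K (N + 1)) with hE
  have hd : (X : K[X]) ^ N ∣ (1 + X) * derivative E - E := by
    have e1 : (1 + X) * derivative E - E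
        = - (-X) ^ N * (pE K N).comp (pL K (N + 1))
          - ((N.factorial : K)⁻¹) • (pL K (N + 1)) ^ N := by
      have : E = (pE K N).comp (pL K (N + 1))
          + ((N.factorial : K)⁻¹) • (pL K (N + 1)) ^ N := by
        rw [hE, pE_succ]
        simp
      have h2 : (1 + X) * derivative E
          = ((1 + X) * derivative (pL K (N + 1))) * (pE K N).comp (pL K (N + 1)) := by
        rw [hE, derivative_comp, derivative_pE]
        ring
      rw [h2, derivative_pL, this]
      ring
    rw [e1]
    refine dvd_sub (Dvd.dvd.mul_right ?_ _) (dvd_smul_of_dvd _ (pow_dvd_pow_of_dvd (X_dvd_pL K _) N))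
    rw [neg_pow]
    exact (Dvd.intro_left _ rfl).neg_right
  rw [X_pow_dvd_iff] at hd ⊢
  have h0 : E.coeff 0 = 1 := by
    obtain ⟨q, hq⟩ := X_dvd_pL K (N + 1)
    rw [coeff_zero_eq_eval_zero, hE, eval_comp, hq]
    simp [pE, eval_finsetSum, Finset.sum_range_succ']
  have hrec : ∀ k < N, E.coeff (k + 1) * ((k : K) + 1) = (1 - (k : K)) * E.coeff k := by
    intro k hk
    have := hd k hk
    rw [add_mul, one_mul, coeff_sub, coeff_add, coeff_derivative] at this
    cases k with
    | zero =>
      simp at this ⊢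
      linear_combination this
    | succ k =>
      rw [coeff_X_mul, coeff_derivative] at this
      push_cast at this ⊢
      linear_combination this
  have key : ∀ k < N + 1, E.coeff k = (1 + X : K[X]).coeff k := by
    intro k
    induction k with
    | zero => intro _; simp [h0]
    | succ k ih =>
      intro hk
      have h1 := hrec k (by omega)
      rw [ih (by omega)] at h1
      have hk0 : ((k : K) + 1) ≠ 0 := by exact_mod_cast Nat.succ_ne_zero k
      apply mul_right_cancel₀ hk0
      rw [h1]
      rcases k with _ | _ | k
      · simp [coeff_one]
      · simp [coeff_one, coeff_X]
      · simp [coeff_one, coeff_X]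
  intro d hd'
  rw [coeff_sub, key d hd', sub_self]

end Poly

variable {K A : Type*} [Field K] [CharZero K] [Ring A] [Algebra K A]
variable (FA : CompleteFilteredAlgebra K A)

lemma F_anti : Antitone FA.F := antitone_nat_of_succ_le FA.F_succ_le

lemma F_mul_left (n : ℕ) (a : A) {x : A} (hx : x ∈ FA.F n) : a * x ∈ FA.F n := by
  have := FA.F_mul 0 n a (by rw [FA.F_zero]; trivial) x hx
  rwa [zero_add] at this

lemma F_mul_right (n : ℕ) (a : A) {x : A} (hx : x ∈ FA.F n) : x * a ∈ FA.F n := by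
  have := FA.F_mul n 0 x hx a (by rw [FA.F_zero]; trivial)
  rwa [add_zero] at this

lemma F_pow {x : A} (hx : x ∈ FA.F 1) (n : ℕ) : x ^ n ∈ FA.F n := by
  induction n with
  | zero => rw [FA.F_zero]; trivial
  | succ n ih => rw [pow_succ]; exact FA.F_mul _ _ _ ih _ hx

lemma exp_spec {x : A} (hx : x ∈ FA.F 1) (N : ℕ) :
    FA.exp x - aeval x (pE K N) ∈ FA.F N := by
  have h : ∀ n : ℕ, ((n.factorial : K)⁻¹ • x ^ n) ∈ FA.F n :=
    fun n => (FA.F n).smul_mem _ (FA.F_pow hx n)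
  have := Classical.choose_spec (FA.F_complete _ h) N
  rw [exp, dif_pos h]
  simpa [pE] using this

lemma log_spec {y : A} (hy : y - 1 ∈ FA.F 1) (N : ℕ) :
    FA.log y - aeval (y - 1) (pL K N) ∈ FA.F N := by
  have h : ∀ n : ℕ, ((((-1 : K) ^ (n - 1)) / (n : K)) • (y - 1) ^ n) ∈ FA.F n :=
    fun n => (FA.F n).smul_mem _ (FA.F_pow hy n)
  have := Classical.choose_spec (FA.F_complete _ h) N
  rw [log, dif_pos h]
  simpa [pL] using this

lemma exp_sub_one_mem {x : A} (hx : x ∈ FA.F 1) : FA.exp x - 1 ∈ FA.F 1 := by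
  simpa [pE] using FA.exp_spec hx 1

lemma log_mem {y : A} (hy : y - 1 ∈ FA.F 1) : FA.log y ∈ FA.F 1 := by
  simpa [pL] using FA.log_spec hy 1

lemma pow_sub_mem {a b : A} (ha : a ∈ FA.F 1) (hb : b ∈ FA.F 1) {n : ℕ} (h : a - b ∈ FA.F n)
    (k : ℕ) : a ^ (k + 1) - b ^ (k + 1) ∈ FA.F (n + k) := by
  induction k with
  | zero => simpa using h
  | succ k ih =>
    have e : a ^ (k + 1 + 1) - b ^ (k + 1 + 1)
        = a ^ (k + 1) * (a - b) + (a ^ (k + 1) - b ^ (k + 1)) * b := by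
      rw [pow_succ a (k + 1), pow_succ b (k + 1)]
      noncomm_ring
    rw [e]
    refine add_mem ?_ (FA.F_mul _ _ _ ih _ hb)
    have := FA.F_mul _ _ _ (FA.F_pow ha (k + 1)) _ h
    rwa [add_comm (k + 1) n] at this

lemma exp_sub_mem {a b : A} (ha : a ∈ FA.F 1) (hb : b ∈ FA.F 1) {n : ℕ} (h : a - b ∈ FA.F n) :
    FA.exp a - FA.exp b - (a - b) ∈ FA.F (n + 1) := by
  have h1 := FA.F_anti (show n + 1 ≤ n + 2 by omega) (FA.exp_spec ha (n + 2))
  have h2 := FA.F_anti (show n + 1 ≤ n + 2 by omega) (FA.exp_spec hb (n + 2))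
  have h3 : aeval a (pE K (n + 2)) - aeval b (pE K (n + 2)) - (a - b) ∈ FA.F (n + 1) := by
    have : aeval a (pE K (n + 2)) - aeval b (pE K (n + 2)) - (a - b)
        = ∑ k ∈ Finset.range n, (((k + 1 + 1).factorial : K)⁻¹) •
            (a ^ (k + 1 + 1) - b ^ (k + 1 + 1)) := by
      simp only [pE, map_sum, map_smul, map_pow, aeval_X, Finset.sum_range_succ', smul_sub,
        Finset.sum_sub_distrib]
      simp
      abel
    rw [this]
    refine Submodule.sum_mem _ fun k _ => Submodule.smul_mem _ _ ?_
    exact FA.F_anti (show n + 1 ≤ n + (k + 1) by omega) (FA.pow_sub_mem ha hb h (k + 1))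
  have := add_mem (sub_mem h1 h2) h3
  convert this using 1
  abel

lemma exp_log {y : A} (hy : y - 1 ∈ FA.F 1) : FA.exp (FA.log y) = y := by
  rw [← sub_eq_zero]
  apply FA.F_sep
  intro n
  apply FA.F_succ_le n
  have hl := FA.log_mem hy
  have hs := FA.log_spec hy (n + 1)
  set l := aeval (y - 1) (pL K (n + 1)) with hldef
  have hl' : l ∈ FA.F 1 := by
    have := sub_mem hl (FA.F_anti (show 1 ≤ n + 1 by omega) hs)
    simpa using this
  have h1 := FA.exp_spec hl (n + 1)
  have h2 : aeval (FA.log y) (pE K (n + 1)) - aeval l (pE K (n + 1)) ∈ FA.F (n + 1) := by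
    simp only [pE, map_sum, map_smul, map_pow, aeval_X]
    rw [← Finset.sum_sub_distrib]
    refine Submodule.sum_mem _ fun k _ => ?_
    rw [← smul_sub]
    refine Submodule.smul_mem _ _ ?_
    cases k with
    | zero => simp
    | succ k => exact FA.F_anti (by omega) (FA.pow_sub_mem hl hl' hs k)
  have h3 : aeval l (pE K (n + 1)) - y ∈ FA.F (n + 1) := by
    obtain ⟨q, hq⟩ := formal K n
    have := congrArg (aeval (y - 1)) hq
    rw [map_sub, aeval_comp, ← hldef] at this
    simp only [map_add, map_one, aeval_X, map_mul, map_pow, add_sub_cancel] at this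
    rw [this]
    exact FA.F_mul_right _ _ (FA.F_pow hy _)
  have := add_mem (add_mem h1 h2) h3
  convert this using 1
  abel

/-- Separation principle: improving the order of a difference forces equality. -/
lemma eq_of_improve {x y : A} (h1 : x - y ∈ FA.F 1)
    (h : ∀ n, x - y ∈ FA.F n → x - y ∈ FA.F (n + 1)) : x = y := by
  rw [← sub_eq_zero]
  apply FA.F_sep
  intro n
  induction n with
  | zero => rw [FA.F_zero]; trivial
  | succ n ih => exact h n ih

lemma exp_inj {x y : A} (hx : x ∈ FA.F 1) (hy : y ∈ FA.F 1) (h : FA.exp x = FA.exp y) :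
    x = y := by
  refine FA.eq_of_improve (sub_mem hx hy) fun n hn => ?_
  have := FA.exp_sub_mem hx hy hn
  rw [h, sub_self, zero_sub] at this
  simpa using neg_mem this

lemma G_inj (R : A →ₗ[K] A) (hR : ∀ n : ℕ, ∀ x ∈ FA.F n, R x ∈ FA.F n) {x y : A}
    (hx : x ∈ FA.F 1) (hy : y ∈ FA.F 1)
    (h : FA.exp (R x) * FA.exp (x - R x) = FA.exp (R y) * FA.exp (y - R y)) : x = y := by
  refine FA.eq_of_improve (sub_mem hx hy) fun n hn => ?_
  have hRx := hR 1 x hx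
  have hRy := hR 1 y hy
  have hTx := sub_mem hx hRx
  have hTy := sub_mem hy hRy
  have hRn : R x - R y ∈ FA.F n := by rw [← map_sub]; exact hR n _ hn
  have hTn : (x - R x) - (y - R y) ∈ FA.F n := by
    have := sub_mem hn hRn
    convert this using 1
    abel
  have d1 := FA.exp_sub_mem hRx hRy hRn
  have d2 := FA.exp_sub_mem hTx hTy hTn
  have m1 := FA.F_mul_left _ (FA.exp (R x)) d2
  have m2 := FA.F_mul_right _ (FA.exp (y - R y)) d1
  have m3 := FA.F_mul _ _ _ hRn _ (FA.exp_sub_one_mem hTy)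
  have m4 := FA.F_mul _ _ _ (FA.exp_sub_one_mem hRx) _ hTn
  rw [add_comm 1 n] at m4
  have := neg_mem (add_mem (add_mem (add_mem m1 m2) m3) m4)
  have e : x - y = -(FA.exp (R x) * (FA.exp (x - R x) - FA.exp (y - R y) - (x - R x - (y - R y)))
      + (FA.exp (R x) - FA.exp (R y) - (R x - R y)) * FA.exp (y - R y)
      + (R x - R y) * (FA.exp (y - R y) - 1)
      + (FA.exp (R x) - 1) * (x - R x - (y - R y)))
      + (FA.exp (R x) * FA.exp (x - R x) - FA.exp (R y) * FA.exp (y - R y)) := by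
    noncomm_ring
  rw [e, h, sub_self, add_zero]
  exact this

lemma G_mem (R : A →ₗ[K] A) (hR : ∀ n : ℕ, ∀ x ∈ FA.F n, R x ∈ FA.F n) {x : A}
    (hx : x ∈ FA.F 1) : FA.exp (R x) * FA.exp (x - R x) - 1 ∈ FA.F 1 := by
  have hRx := hR 1 x hx
  have := add_mem (FA.F_mul_right _ (FA.exp (x - R x)) (FA.exp_sub_one_mem hRx))
    (FA.exp_sub_one_mem (sub_mem hx hRx))
  convert this using 1
  noncomm_ring

end CompleteFilteredAlgebra

/-- For a complete filtered algebra `A` over a field `K` of characteristic zero,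
a filtration-preserving `K`-linear map `R`, `R̃ := id - R`, and the (unique) map `χ : A₁ → A₁`
with `(χ - id)(Aₙ) ⊆ A₂ₙ` and `exp(R(χ x)) * exp(R̃(χ x)) = exp x`, the map `χ` is a bijection
of `A₁` onto itself, with inverse `χ⁻¹(x) = log(exp(R x) * exp(R̃ x))`. -/
theorem bch_recursion_inverse {K A : Type*} [Field K] [CharZero K]
    [Ring A] [Algebra K A] (FA : CompleteFilteredAlgebra K A) (R : A →ₗ[K] A)
    (hR : ∀ n : ℕ, ∀ x ∈ FA.F n, R x ∈ FA.F n)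
    (χ : FA.F 1 → FA.F 1)
    (hdev : ∀ n : ℕ, 1 ≤ n → ∀ x : FA.F 1, (x : A) ∈ FA.F n →
      ((χ x : A) - (x : A)) ∈ FA.F (2 * n))
    (hfact : ∀ x : FA.F 1,
      FA.exp (R (χ x)) * FA.exp ((χ x : A) - R (χ x)) = FA.exp (x : A)) :
    Function.Bijective χ ∧
    ∃ ψ : FA.F 1 → FA.F 1, Function.LeftInverse ψ χ ∧ Function.RightInverse ψ χ ∧
      ∀ x : FA.F 1, (ψ x : A) = FA.log (FA.exp (R x) * FA.exp ((x : A) - R x)) := by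
  have hl : Function.LeftInverse
      (fun x : FA.F 1 => (⟨FA.log (FA.exp (R x) * FA.exp ((x : A) - R x)),
        FA.log_mem (FA.G_mem R hR x.2)⟩ : FA.F 1)) χ := by
    intro x
    apply Subtype.ext
    refine FA.exp_inj (FA.log_mem (FA.G_mem R hR (χ x).2)) x.2 ?_
    rw [FA.exp_log (FA.G_mem R hR (χ x).2), hfact]
  have hr : Function.RightInverse
      (fun x : FA.F 1 => (⟨FA.log (FA.exp (R x) * FA.exp ((x : A) - R x)),
        FA.log_mem (FA.G_mem R hR x.2)⟩ : FA.F 1)) χ := by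
    intro x
    apply Subtype.ext
    refine FA.G_inj R hR (Subtype.property _) x.2 ?_
    rw [hfact, FA.exp_log (FA.G_mem R hR x.2)]
  exact ⟨⟨hl.injective, hr.surjective⟩, _, hl, hr, fun x => rfl⟩
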